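/- arXiv:2003.09102 — 2 statements merged into one kernel-verified Lean document; each statement's English description precedes it below -/
import Mathlib

section
/- There is an absolute constant K such that for every prime p ≥ 5 and every real X with p³ ≤ X, the number of pairs (A,B) ∈ E(X) with p ∣ 4A³+27B² (i.e. the elliptic curves y² = x³+Ax+B in the family with bad reduction at p) differs from ((p^{10}−p)/p^{11})·(p^{10}/(p^{10}−1))·(4/ζ(10))·X^{5/6} by at most K·p·X^{1/2}, where ζ is the Riemann zeta function. -/
/-- Condition (M): for every prime `q`, `q⁴ ∣ A` implies `q⁶ ∤ B`. -/
def CondM (A B : ℤ) : Prop := ∀ q : ℕ, q.Prime → (q : ℤ) ^ 4 ∣ A → ¬ (q : ℤ) ^ 6 ∣ B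

/-- The family `E(X)`: pairs `(A,B)` with `4A³+27B² ≠ 0`, naive height at most `X`,
satisfying condition (M). -/
def Efam (X : ℝ) : Set (ℤ × ℤ) :=
  {AB | 4 * AB.1 ^ 3 + 27 * AB.2 ^ 2 ≠ 0 ∧ ((max (|AB.1| ^ 3) (AB.2 ^ 2) : ℤ) : ℝ) ≤ X ∧
        CondM AB.1 AB.2}

/-! Write `X = z⁶`; the height bound is then `|A| ≤ z²`, `|B| ≤ z³`. Over `𝔽_p` the cuspidal cubic
`4A³ + 27B² = 0` has exactly `p` points, so counting lattice points in `p` residue classes modulo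
`p` shows that a proportion `1/p` of the box has discriminant divisible by `p`. Condition (M) is
imposed by Möbius inversion over the `d` with `d⁴ ∣ A` and `d⁶ ∣ B`: the substitution
`(A, B) = (d⁴a, d⁶b)` shrinks `z` to `z / d²` and multiplies the discriminant by `d¹²`, so the
density becomes `1` when `p ∣ d`. Once the origin is left out, the error is `O(p z³ / d⁶)` uniformly
in `d`, which is summable over all `d`. The singular pairs contribute `O(z³)`.
-/

open Finset ArithmeticFunction
open scoped ArithmeticFunction.Moebius

/-- The integers of absolute value at most `y`. -/
noncomputable def intBall (y : ℝ) : Finset ℤ := Icc (-⌊y⌋) ⌊y⌋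

lemma mem_intBall {y : ℝ} {x : ℤ} : x ∈ intBall y ↔ |(x : ℝ)| ≤ y := by
  rw [intBall, mem_Icc, ← abs_le, Int.le_floor, Int.cast_abs]

lemma card_intBall {y : ℝ} (hy : 0 ≤ y) : (#(intBall y) : ℝ) = 2 * ⌊y⌋ + 1 := by
  have hfloor : 0 ≤ ⌊y⌋ := Int.floor_nonneg.mpr hy
  have hcard : (#(intBall y) : ℤ) = 2 * ⌊y⌋ + 1 := by
    rw [intBall, Int.card_Icc]
    lia
  exact_mod_cast hcard

lemma abs_card_Ioc_modEq_sub_le {a b r : ℤ} (hab : a ≤ b) (hr : 0 < r) (v : ℤ) :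
    |(#{x ∈ Ioc a b | x ≡ v [ZMOD r]} : ℝ) - (b - a) / r| ≤ 1 := by
  have hmono : ⌊(a - v : ℚ) / r⌋ ≤ ⌊(b - v : ℚ) / r⌋ := by gcongr
  have hcount : (#{x ∈ Ioc a b | x ≡ v [ZMOD r]} : ℚ)
      = ⌊(b - v : ℚ) / r⌋ - ⌊(a - v : ℚ) / r⌋ := by
    have h := Int.Ioc_filter_modEq_card a b hr v
    rw [max_eq_left (sub_nonneg.mpr hmono)] at h
    exact_mod_cast h
  have hlength : (b - a : ℚ) / r = (b - v) / r - (a - v) / r := by ring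
  have hrat : |(#{x ∈ Ioc a b | x ≡ v [ZMOD r]} : ℚ) - (b - a) / r| ≤ 1 := by
    rw [hcount, hlength, abs_le]
    constructor <;>
      linarith [Int.floor_le ((b - v : ℚ) / r), Int.lt_floor_add_one ((b - v : ℚ) / r),
        Int.floor_le ((a - v : ℚ) / r), Int.lt_floor_add_one ((a - v : ℚ) / r)]
  exact_mod_cast hrat

lemma abs_card_intBall_residue_sub_le {m : ℕ} [NeZero m] {y : ℝ} (hy : 0 ≤ y) (v : ZMod m) :
    |(#{x ∈ intBall y | ((x : ℤ) : ZMod m) = v} : ℝ) - 2 * y / m| ≤ 2 := by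
  obtain ⟨k, rfl⟩ := ZMod.intCast_surjective v
  have hm : (1 : ℝ) ≤ m := by exact_mod_cast NeZero.one_le
  have hfloor : 0 ≤ ⌊y⌋ := Int.floor_nonneg.mpr hy
  have hcount := abs_card_Ioc_modEq_sub_le (a := -⌊y⌋ - 1) (b := ⌊y⌋) (r := m) (by lia)
    (by exact_mod_cast NeZero.pos m) k
  have hlength : |((⌊y⌋ : ℝ) - (-⌊y⌋ - 1 : ℤ)) / (m : ℤ) - 2 * y / m| ≤ 1 := by
    rw [Int.cast_natCast, ← sub_div, abs_div, abs_of_pos (zero_lt_one.trans_le hm)]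
    refine div_le_one_of_le₀ (le_trans ?_ hm) (zero_le_one.trans hm)
    push_cast
    rw [abs_le]
    constructor <;> linarith [Int.floor_le y, Int.lt_floor_add_one y]
  simp only [ZMod.intCast_eq_intCast_iff, intBall, ← Ioc_sub_one_left_eq_Icc]
  exact (abs_sub_le _ _ _).trans ((add_le_add hcount hlength).trans_eq (by norm_num))

/-- The pairs `(A, B)` with `max (|A|³, B²) ≤ w⁶`, where `w ≥ 0`. -/
noncomputable def heightBox (w : ℝ) : Finset (ℤ × ℤ) := intBall (w ^ 2) ×ˢ intBall (w ^ 3)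

lemma mem_heightBox {w : ℝ} {x : ℤ × ℤ} :
    x ∈ heightBox w ↔ |(x.1 : ℝ)| ≤ w ^ 2 ∧ |(x.2 : ℝ)| ≤ w ^ 3 := by
  rw [heightBox, mem_product, mem_intBall, mem_intBall]

lemma height_le_pow_six_iff {w : ℝ} (hw : 0 ≤ w) {x : ℤ × ℤ} :
    ((max (|x.1| ^ 3) (x.2 ^ 2) : ℤ) : ℝ) ≤ w ^ 6 ↔ x ∈ heightBox w := by
  have hfst : |(x.1 : ℝ)| ^ 3 ≤ w ^ 6 ↔ |(x.1 : ℝ)| ≤ w ^ 2 := by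
    rw [show w ^ 6 = (w ^ 2) ^ 3 by ring]
    exact pow_le_pow_iff_left₀ (abs_nonneg _) (by positivity) (by norm_num)
  have hsnd : (x.2 : ℝ) ^ 2 ≤ w ^ 6 ↔ |(x.2 : ℝ)| ≤ w ^ 3 := by
    rw [show w ^ 6 = (w ^ 3) ^ 2 by ring, sq_le_sq, abs_of_nonneg (by positivity : 0 ≤ w ^ 3)]
  rw [mem_heightBox, ← hfst, ← hsnd]
  push_cast
  exact max_le_iff

lemma eq_zero_of_mem_heightBox {w : ℝ} (hw : 0 ≤ w) (hw1 : w < 1) {x : ℤ × ℤ}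
    (hx : x ∈ heightBox w) : x = 0 := by
  rw [mem_heightBox] at hx
  have hfst : |x.1| < 1 := by exact_mod_cast hx.1.trans_lt (pow_lt_one₀ hw hw1 (by norm_num))
  have hsnd : |x.2| < 1 := by exact_mod_cast hx.2.trans_lt (pow_lt_one₀ hw hw1 (by norm_num))
  exact Prod.ext (Int.abs_lt_one_iff.mp hfst) (Int.abs_lt_one_iff.mp hsnd)

lemma abs_mul_sub_mul_le {x y a b ε : ℝ} (ha : 0 ≤ a) (hb : 0 ≤ b)
    (hx : |x - a| ≤ ε) (hy : |y - b| ≤ ε) : |x * y - a * b| ≤ ε * a + ε * b + ε ^ 2 := by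
  have hε : 0 ≤ ε := (abs_nonneg _).trans hx
  calc |x * y - a * b| = |(x - a) * (y - b) + a * (y - b) + (x - a) * b| := by ring_nf
    _ ≤ |x - a| * |y - b| + a * |y - b| + |x - a| * b := by
      refine (abs_add_three _ _ _).trans_eq ?_
      rw [abs_mul, abs_mul, abs_mul, abs_of_nonneg ha, abs_of_nonneg hb]
    _ ≤ ε * ε + a * ε + ε * b := by gcongr
    _ = ε * a + ε * b + ε ^ 2 := by ring

lemma abs_card_heightBox_residue_sub_le {m : ℕ} [NeZero m] (S : Finset (ZMod m × ZMod m))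
    {w : ℝ} (hw : 0 ≤ w) :
    |(#{x ∈ heightBox w | ((x.1 : ZMod m), (x.2 : ZMod m)) ∈ S} : ℝ) - #S * (4 * w ^ 5 / m ^ 2)|
      ≤ #S * (4 * w ^ 2 / m + 4 * w ^ 3 / m + 4) := by
  have hfiber (s : ZMod m × ZMod m) :
      |(#{x ∈ heightBox w | ((x.1 : ZMod m), (x.2 : ZMod m)) = s} : ℝ) - 4 * w ^ 5 / m ^ 2|
        ≤ 4 * w ^ 2 / m + 4 * w ^ 3 / m + 4 := by
    have hprod := abs_mul_sub_mul_le (by positivity) (by positivity)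
      (abs_card_intBall_residue_sub_le (pow_nonneg hw 2) s.1)
      (abs_card_intBall_residue_sub_le (pow_nonneg hw 3) s.2)
    rw [← Nat.cast_mul, ← card_product, ← filter_product] at hprod
    convert hprod using 3
    · rw [heightBox]
      simp only [Prod.ext_iff]
    · ring
    · ring
    · ring
    · norm_num
  rw [← sum_card_fiberwise_eq_card_filter, Nat.cast_sum, ← nsmul_eq_mul, ← sum_const,
    ← sum_sub_distrib, ← nsmul_eq_mul, ← sum_const]
  exact (abs_sum_le_sum_abs _ _).trans (sum_le_sum fun s _ => hfiber s)

lemma abs_card_heightBox_sub_le {w : ℝ} (hw : 0 ≤ w) :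
    |(#(heightBox w) : ℝ) - 4 * w ^ 5| ≤ 4 * w ^ 2 + 4 * w ^ 3 + 4 := by
  simpa using abs_card_heightBox_residue_sub_le (m := 1) univ hw

/-- The bound `13 q w³` holds down to `w = 0` because the origin, the only point of a box with
`w < 1`, is left out. -/
lemma abs_card_heightBox_ne_zero_sub_le (P : ℤ × ℤ → Prop) [DecidablePred P] {q M w : ℝ}
    (hq : 1 ≤ q) (hw : 0 ≤ w) (hM0 : 0 ≤ M) (hM : M ≤ 4 * w ^ 5)
    (h : |(#{x ∈ heightBox w | P x} : ℝ) - M| ≤ 4 * w ^ 2 + 4 * w ^ 3 + 4 * q) :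
    |(#{x ∈ heightBox w | P x ∧ x ≠ 0} : ℝ) - M| ≤ 13 * q * w ^ 3 := by
  have hqw : w ^ 3 ≤ q * w ^ 3 := le_mul_of_one_le_left (by positivity) hq
  rcases lt_or_ge w 1 with hw1 | hw1
  · have hempty : {x ∈ heightBox w | P x ∧ x ≠ 0} = ∅ :=
      filter_eq_empty_iff.mpr fun x hx hPx => hPx.2 (eq_zero_of_mem_heightBox hw hw1 hx)
    have hpow : w ^ 5 ≤ w ^ 3 := pow_le_pow_of_le_one hw hw1.le (by norm_num)
    rw [hempty, card_empty, Nat.cast_zero, zero_sub, abs_neg, abs_of_nonneg hM0]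
    linarith [pow_nonneg hw 3]
  · have herase : {x ∈ heightBox w | P x ∧ x ≠ 0} = {x ∈ heightBox w | P x}.erase 0 := by
      grind
    have hlower : (#{x ∈ heightBox w | P x} : ℝ) - 1 ≤ #{x ∈ heightBox w | P x ∧ x ≠ 0} := by
      rw [herase, sub_le_iff_le_add]
      exact_mod_cast tsub_le_iff_right.mp pred_card_le_card_erase
    have hupper : (#{x ∈ heightBox w | P x ∧ x ≠ 0} : ℝ) ≤ #{x ∈ heightBox w | P x} := by
      rw [herase]
      exact_mod_cast card_erase_le
    have hpow : w ^ 2 ≤ w ^ 3 := pow_le_pow_right₀ hw1 (by norm_num)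
    have hone : q ≤ q * w ^ 3 := le_mul_of_one_le_right (by positivity) (one_le_pow₀ hw1)
    rw [abs_le] at h ⊢
    constructor <;> linarith

section Discriminant

variable {R : Type*} [CommRing R]

/-- `4A³ + 27B²`, up to sign the discriminant of the cubic `X³ + AX + B`. -/
def cubicDisc (x : R × R) : R := 4 * x.1 ^ 3 + 27 * x.2 ^ 2

lemma intCast_cubicDisc (x : ℤ × ℤ) :
    ((cubicDisc x : ℤ) : R) = cubicDisc ((x.1 : R), (x.2 : R)) := by
  simp [cubicDisc]

/-- The weighted homogeneous action `(A, B) ↦ (d⁴A, d⁶B)`, which replaces the curve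
`y² = x³ + Ax + B` by an isomorphic one. -/
def weightedScale (d : R) (x : R × R) : R × R := (d ^ 4 * x.1, d ^ 6 * x.2)

lemma cubicDisc_weightedScale (d : R) (x : R × R) :
    cubicDisc (weightedScale d x) = d ^ 12 * cubicDisc x := by
  simp only [cubicDisc, weightedScale]
  ring

lemma weightedScale_injective [IsDomain R] {d : R} (hd : d ≠ 0) :
    Function.Injective (weightedScale d) := fun _ _ h =>
  Prod.ext (mul_left_cancel₀ (pow_ne_zero 4 hd) (congrArg Prod.fst h))
    (mul_left_cancel₀ (pow_ne_zero 6 hd) (congrArg Prod.snd h))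

lemma weightedScale_eq_zero_iff [IsDomain R] {d : R} (hd : d ≠ 0) {x : R × R} :
    weightedScale d x = 0 ↔ x = 0 := by
  simp [weightedScale, Prod.ext_iff, hd]

end Discriminant

/-- The cuspidal cubic `4A³ + 27B² = 0` is parametrized by `t ↦ (-3t², 2t³)`, with inverse
`t = -3B / (2A)` (which gives `t = 0` at the cusp, as division by zero is zero). In characteristics
`2` and `3` the equation degenerates to `B = 0` and `A = 0`. -/
lemma card_cubicDisc_eq_zero (F : Type*) [Field F] [Fintype F] [DecidableEq F] :
    #{x : F × F | cubicDisc x = 0} = Fintype.card F := by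
  rw [← card_univ]
  by_cases h2 : (2 : F) = 0
  · have h4 : (4 : F) = 0 := by linear_combination 2 * h2
    have h27 : (27 : F) = 1 := by linear_combination 13 * h2
    refine card_nbij' Prod.fst (fun t => (t, 0)) ?_ ?_ ?_ ?_ <;>
      simp +contextual [Set.MapsTo, Set.LeftInvOn, cubicDisc, h4, h27]
  by_cases h3 : (3 : F) = 0
  · have h4 : (4 : F) = 1 := by linear_combination h3
    have h27 : (27 : F) = 0 := by linear_combination 9 * h3
    refine card_nbij' Prod.snd (fun t => (0, t)) ?_ ?_ ?_ ?_ <;>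
      simp +contextual [Set.MapsTo, Set.LeftInvOn, cubicDisc, h4, h27]
  have h27 : (27 : F) ≠ 0 := by
    rw [show (27 : F) = 3 ^ 3 by norm_num]
    exact pow_ne_zero 3 h3
  refine card_nbij' (fun x => -3 * x.2 / (2 * x.1)) (fun t => (-3 * t ^ 2, 2 * t ^ 3))
    (fun _ _ => mem_coe.mpr (mem_univ _)) (fun t _ => ?_) ?_ (fun t _ => ?_)
  · refine mem_coe.mpr ((mem_filter_univ _).mpr ?_)
    simp only [cubicDisc]
    ring
  · rintro ⟨A, B⟩ hx
    have hdisc : 4 * A ^ 3 + 27 * B ^ 2 = 0 := (mem_filter.mp (mem_coe.mp hx)).2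
    by_cases hA : A = 0
    · have hB : B = 0 := by simpa [hA, h27] using hdisc
      simp [hA, hB]
    · ext
      · field_simp
        linear_combination -hdisc
      · field_simp
        linear_combination -B * hdisc
  · rcases eq_or_ne t 0 with rfl | ht
    · simp
    · field_simp

lemma abs_card_dvd_cubicDisc_sub_le {p : ℕ} (hp : p.Prime) {w : ℝ} (hw : 0 ≤ w) :
    |(#{x ∈ heightBox w | (p : ℤ) ∣ cubicDisc x} : ℝ) - 4 * w ^ 5 / p|
      ≤ 4 * w ^ 2 + 4 * w ^ 3 + 4 * p := by
  have : Fact p.Prime := ⟨hp⟩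
  have hp0 : (p : ℝ) ≠ 0 := by exact_mod_cast hp.ne_zero
  have h := abs_card_heightBox_residue_sub_le {x : ZMod p × ZMod p | cubicDisc x = 0} hw
  simp only [card_cubicDisc_eq_zero, ZMod.card, mem_filter, mem_univ, true_and,
    ← intCast_cubicDisc, ZMod.intCast_zmod_eq_zero_iff_dvd] at h
  convert h using 1
  · congr 2
    field_simp
  · field_simp

lemma card_cubicDisc_eq_zero_ne_zero_le {z : ℝ} (hz : 0 ≤ z) :
    (#{x ∈ heightBox z | cubicDisc x = 0 ∧ x ≠ 0} : ℝ) ≤ 2 * z ^ 3 := by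
  have hmem {x : ℤ × ℤ} (hx : x ∈ {x ∈ heightBox z | cubicDisc x = 0 ∧ x ≠ 0}) :
      x.2 ∈ (intBall (z ^ 3)).erase 0 := by
    rw [mem_filter, heightBox, mem_product] at hx
    obtain ⟨⟨-, hbox⟩, hdisc, hne⟩ := hx
    refine mem_erase.mpr ⟨fun hB => hne (Prod.ext ?_ hB), hbox⟩
    simpa [cubicDisc, hB] using hdisc
  have hinj : Set.InjOn Prod.snd
      (({x ∈ heightBox z | cubicDisc x = 0 ∧ x ≠ 0} : Finset (ℤ × ℤ)) : Set (ℤ × ℤ)) := by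
    intro x hx y hy hxy
    have hxdisc := (mem_filter.mp hx).2.1
    have hydisc := (mem_filter.mp hy).2.1
    have hcube : x.1 ^ 3 = y.1 ^ 3 := by
      simp only [cubicDisc, hxy] at hxdisc hydisc
      linarith
    exact Prod.ext ((Odd.strictMono_pow (by decide : Odd 3)).injective hcube) hxy
  have hzero : (0 : ℤ) ∈ intBall (z ^ 3) := by
    rw [mem_intBall]
    simpa using pow_nonneg hz 3
  calc (#{x ∈ heightBox z | cubicDisc x = 0 ∧ x ≠ 0} : ℝ)
      ≤ #((intBall (z ^ 3)).erase 0) := by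
        exact_mod_cast card_le_card_of_injOn _ (fun x hx => hmem hx) hinj
    _ = 2 * ⌊z ^ 3⌋ := by
        rw [cast_card_erase_of_mem hzero, card_intBall (pow_nonneg hz 3), add_sub_cancel_right]
    _ ≤ 2 * z ^ 3 := by linarith [Int.floor_le (z ^ 3)]

/-- The proportion of pairs `x` such that `p` divides the discriminant of `weightedScale d x`. -/
noncomputable def discDensity (p d : ℕ) : ℝ := if p ∣ d then 1 else 1 / p

lemma discDensity_nonneg (p d : ℕ) : 0 ≤ discDensity p d := by
  rw [discDensity]
  split_ifs <;> positivity

lemma discDensity_le_one (p d : ℕ) : discDensity p d ≤ 1 := by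
  rw [discDensity]
  split_ifs
  · rfl
  · simpa using Nat.cast_inv_le_one p

lemma abs_card_dvd_cubicDisc_weightedScale_sub_le {p : ℕ} (hp : p.Prime) (d : ℕ) {w : ℝ}
    (hw : 0 ≤ w) :
    |(#{x ∈ heightBox w | (p : ℤ) ∣ cubicDisc (weightedScale (d : ℤ) x)} : ℝ)
      - 4 * w ^ 5 * discDensity p d| ≤ 4 * w ^ 2 + 4 * w ^ 3 + 4 * p := by
  have hpZ : Prime (p : ℤ) := Nat.prime_iff_prime_int.mp hp
  simp only [cubicDisc_weightedScale, hpZ.dvd_mul, hpZ.dvd_pow_iff_dvd (by norm_num : 12 ≠ 0),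
    Int.natCast_dvd_natCast, discDensity]
  by_cases hpd : p ∣ d
  · have hp1 : (1 : ℝ) ≤ p := by exact_mod_cast hp.one_le
    simpa [hpd] using (abs_card_heightBox_sub_le hw).trans (by linarith)
  · simpa only [hpd, false_or, if_false, mul_one_div] using abs_card_dvd_cubicDisc_sub_le hp hw

/-- The largest `d` such that `d⁴ ∣ A` and `d⁶ ∣ B`, for `x = (A, B) ≠ 0` (and `0` for `x = 0`,
where the supremum is over an unbounded set). -/
noncomputable def weightedGCD (x : ℤ × ℤ) : ℕ :=
  sSup {d : ℕ | (d : ℤ) ^ 4 ∣ x.1 ∧ (d : ℤ) ^ 6 ∣ x.2}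

lemma natCast_lcm_pow_dvd {a b k : ℕ} {c : ℤ} (ha : (a : ℤ) ^ k ∣ c) (hb : (b : ℤ) ^ k ∣ c) :
    ((a.lcm b : ℕ) : ℤ) ^ k ∣ c := by
  rw [← Nat.cast_pow, Int.natCast_dvd] at ha hb ⊢
  rw [← Nat.pow_lcm_pow]
  exact Nat.lcm_dvd ha hb

section WeightedGCD

variable {x : ℤ × ℤ}

lemma le_gcd_of_pow_dvd (hx : x ≠ 0) {d : ℕ} (h : (d : ℤ) ^ 4 ∣ x.1 ∧ (d : ℤ) ^ 6 ∣ x.2) :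
    d ≤ Int.gcd x.1 x.2 := by
  have hpos : 0 < Int.gcd x.1 x.2 := by
    rw [Int.gcd_pos_iff]
    by_contra! h0
    exact hx (Prod.ext h0.1 h0.2)
  exact Nat.le_of_dvd hpos <| Int.natCast_dvd_natCast.mp <| Int.dvd_coe_gcd
    ((dvd_pow_self _ (by norm_num)).trans h.1) ((dvd_pow_self _ (by norm_num)).trans h.2)

lemma dvd_weightedGCD_iff (hx : x ≠ 0) {d : ℕ} :
    d ∣ weightedGCD x ↔ (d : ℤ) ^ 4 ∣ x.1 ∧ (d : ℤ) ^ 6 ∣ x.2 := by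
  set T : Set ℕ := {d | (d : ℤ) ^ 4 ∣ x.1 ∧ (d : ℤ) ^ 6 ∣ x.2} with hT
  have hbdd : BddAbove T := ⟨_, fun _ hd => le_gcd_of_pow_dvd hx hd⟩
  have hone : 1 ∈ T := by simp [hT]
  have hmem : weightedGCD x ∈ T := Nat.sSup_mem ⟨1, hone⟩ hbdd
  have hzero : 0 ∉ T := fun h0 => hx (Prod.ext (by simpa using h0.1) (by simpa using h0.2))
  constructor
  · intro hd
    have hdZ : (d : ℤ) ∣ weightedGCD x := Int.natCast_dvd_natCast.mpr hd
    exact ⟨(pow_dvd_pow_of_dvd hdZ 4).trans hmem.1, (pow_dvd_pow_of_dvd hdZ 6).trans hmem.2⟩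
  · intro hd
    have hlcm : d.lcm (weightedGCD x) ∈ T :=
      ⟨natCast_lcm_pow_dvd hd.1 hmem.1, natCast_lcm_pow_dvd hd.2 hmem.2⟩
    have heq : d.lcm (weightedGCD x) = weightedGCD x :=
      (le_csSup hbdd hlcm).antisymm
        (Nat.le_of_dvd (Nat.pos_of_ne_zero (ne_of_mem_of_not_mem hlcm hzero))
          (Nat.dvd_lcm_right _ _))
    exact heq ▸ Nat.dvd_lcm_left d _

lemma weightedGCD_ne_zero (hx : x ≠ 0) : weightedGCD x ≠ 0 := by
  intro h0
  have hzero := (dvd_weightedGCD_iff hx).mp h0.symm.dvd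
  exact hx (Prod.ext (by simpa using hzero.1) (by simpa using hzero.2))

lemma condM_iff_weightedGCD_eq_one (hx : x ≠ 0) : CondM x.1 x.2 ↔ weightedGCD x = 1 := by
  simp only [Nat.eq_one_iff_not_exists_prime_dvd, dvd_weightedGCD_iff hx, not_and, CondM]

end WeightedGCD

lemma weightedScale_mem_heightBox_iff {d : ℕ} (hd : d ≠ 0) {z : ℝ} {x : ℤ × ℤ} :
    weightedScale (d : ℤ) x ∈ heightBox z ↔ x ∈ heightBox (z / d ^ 2) := by
  simp only [mem_heightBox, weightedScale]
  push_cast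
  rw [abs_mul, abs_mul, abs_pow, abs_pow, Nat.abs_cast, div_pow, div_pow, ← pow_mul, ← pow_mul,
    le_div_iff₀' (by positivity), le_div_iff₀' (by positivity)]

lemma card_heightBox_pow_dvd (P : ℤ × ℤ → Prop) [DecidablePred P] {d : ℕ} (hd : d ≠ 0) (z : ℝ) :
    #{x ∈ heightBox z | P x ∧ (d : ℤ) ^ 4 ∣ x.1 ∧ (d : ℤ) ^ 6 ∣ x.2}
      = #{x ∈ heightBox (z / d ^ 2) | P (weightedScale (d : ℤ) x)} := by
  refine Eq.trans ?_
    (card_image_of_injective _ (weightedScale_injective (Nat.cast_ne_zero (R := ℤ).mpr hd)))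
  congr 1
  ext x
  simp only [mem_image, mem_filter]
  constructor
  · rintro ⟨hx, hP, ⟨a, ha⟩, ⟨b, hb⟩⟩
    obtain rfl : x = weightedScale (d : ℤ) (a, b) := Prod.ext ha hb
    exact ⟨(a, b), ⟨(weightedScale_mem_heightBox_iff hd).mp hx, hP⟩, rfl⟩
  · rintro ⟨y, ⟨hy, hP⟩, rfl⟩
    exact ⟨(weightedScale_mem_heightBox_iff hd).mpr hy, hP, dvd_mul_right _ _, dvd_mul_right _ _⟩

/-- The nonzero pairs of height at most `z⁶` whose discriminant is divisible by `p`. -/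
noncomputable def badPairs (p : ℕ) (z : ℝ) : Finset (ℤ × ℤ) :=
  {x ∈ heightBox z | (p : ℤ) ∣ cubicDisc x ∧ x ≠ 0}

lemma mem_badPairs {p : ℕ} {z : ℝ} {x : ℤ × ℤ} :
    x ∈ badPairs p z ↔ x ∈ heightBox z ∧ (p : ℤ) ∣ cubicDisc x ∧ x ≠ 0 := mem_filter

lemma card_badPairs_dvd_weightedGCD {p d : ℕ} (hd : d ≠ 0) (z : ℝ) :
    #{x ∈ badPairs p z | d ∣ weightedGCD x}
      = #{x ∈ heightBox (z / d ^ 2) | (p : ℤ) ∣ cubicDisc (weightedScale (d : ℤ) x) ∧ x ≠ 0} := by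
  have hfilter : {x ∈ badPairs p z | d ∣ weightedGCD x} = {x ∈ heightBox z |
      ((p : ℤ) ∣ cubicDisc x ∧ x ≠ 0) ∧ (d : ℤ) ^ 4 ∣ x.1 ∧ (d : ℤ) ^ 6 ∣ x.2} := by
    rw [badPairs, filter_filter]
    exact filter_congr fun x _ => and_congr_right fun hx => dvd_weightedGCD_iff hx.2
  rw [hfilter, card_heightBox_pow_dvd (fun x => (p : ℤ) ∣ cubicDisc x ∧ x ≠ 0) hd]
  simp only [ne_eq, weightedScale_eq_zero_iff (Nat.cast_ne_zero (R := ℤ).mpr hd)]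

lemma abs_card_badPairs_dvd_weightedGCD_sub_le {p d : ℕ} (hp : p.Prime) (hd : d ≠ 0) {z : ℝ}
    (hz : 0 ≤ z) :
    |(#{x ∈ badPairs p z | d ∣ weightedGCD x} : ℝ) - 4 * z ^ 5 * (discDensity p d / d ^ 10)|
      ≤ 13 * p * z ^ 3 * (1 / d ^ 6) := by
  have hw : 0 ≤ z / d ^ 2 := by positivity
  have hmain : 4 * z ^ 5 * (discDensity p d / d ^ 10) = 4 * (z / d ^ 2) ^ 5 * discDensity p d := by
    ring
  have herror : 13 * p * z ^ 3 * (1 / (d : ℝ) ^ 6) = 13 * p * (z / d ^ 2) ^ 3 := by ring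
  rw [card_badPairs_dvd_weightedGCD hd, hmain, herror]
  exact abs_card_heightBox_ne_zero_sub_le _ (by exact_mod_cast hp.one_le) hw
    (mul_nonneg (by positivity) (discDensity_nonneg p d))
    (mul_le_of_le_one_right (by positivity) (discDensity_le_one p d))
    (abs_card_dvd_cubicDisc_weightedScale_sub_le hp d hw)

section Moebius

lemma hasSum_moebius_dvd {n : ℕ} (hn : n ≠ 0) :
    HasSum (fun d : ℕ => if d ∣ n then (μ d : ℝ) else 0) (if n = 1 then 1 else 0) := by
  have hsum : ∑ d ∈ n.divisors, (μ d : ℝ) = if n = 1 then 1 else 0 := by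
    have h := congrArg (fun f : ArithmeticFunction ℤ => f n) coe_zeta_mul_moebius
    simp only [coe_zeta_mul_apply, one_apply] at h
    exact_mod_cast h
  rw [← hsum, sum_congr rfl fun d hd => (if_pos (Nat.dvd_of_mem_divisors hd)).symm]
  refine hasSum_sum_of_ne_finset_zero fun d hd => if_neg fun hdn => ?_
  exact hd (Nat.mem_divisors.mpr ⟨hdn, hn⟩)

lemma hasSum_moebius_mul_card_dvd {α : Type*} (s : Finset α) {n : α → ℕ}
    (hn : ∀ x ∈ s, n x ≠ 0) :
    HasSum (fun d : ℕ => (μ d : ℝ) * #{x ∈ s | d ∣ n x}) #{x ∈ s | n x = 1} := by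
  have h := hasSum_sum fun x hx => hasSum_moebius_dvd (hn x hx)
  simpa only [← sum_filter, sum_const, nsmul_eq_mul, mul_one, mul_comm (_ : ℝ) (μ _ : ℝ)] using h

lemma abs_moebius_real_le_one (n : ℕ) : |(μ n : ℝ)| ≤ 1 := by
  exact_mod_cast abs_moebius_le_one (n := n)

lemma moebius_prime_mul {p : ℕ} (hp : p.Prime) (m : ℕ) :
    μ (p * m) = if p ∣ m then 0 else -μ m := by
  split_ifs with hpm
  · refine moebius_eq_zero_of_not_squarefree fun hsq => hp.one_lt.ne' ?_
    exact Nat.isUnit_iff.mp (hsq p (mul_dvd_mul_left p hpm))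
  · rw [isMultiplicative_moebius.map_mul_of_coprime (hp.coprime_iff_not_dvd.mpr hpm),
      moebius_apply_prime hp, neg_one_mul]

variable {k : ℕ}

lemma summable_moebius_div_pow (hk : 1 < k) : Summable fun n : ℕ => (μ n : ℝ) / n ^ k := by
  refine Summable.of_norm_bounded (Real.summable_one_div_nat_pow.mpr hk) fun n => ?_
  rw [norm_div, norm_pow, Real.norm_natCast]
  gcongr
  exact abs_moebius_real_le_one n

lemma tsum_moebius_div_pow (hk : 1 < k) :
    ∑' n : ℕ, (μ n : ℝ) / n ^ k = 1 / (riemannZeta k).re := by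
  have hre : 1 < (k : ℂ).re := by simpa using hk
  have hLSeries : LSeries (fun n => (μ n : ℂ)) k = ((∑' n : ℕ, (μ n : ℝ) / n ^ k : ℝ) : ℂ) := by
    rw [LSeries, Complex.ofReal_tsum]
    refine tsum_congr fun n => ?_
    rw [LSeries.term_def, Complex.cpow_natCast]
    split_ifs with hn
    · simp [hn]
    · push_cast
      rfl
  have hzeta := LSeries_zeta_mul_Lseries_moebius hre
  rw [LSeries_zeta_eq_riemannZeta hre, hLSeries] at hzeta
  rw [eq_inv_of_mul_eq_one_left hzeta, ← Complex.ofReal_inv, Complex.ofReal_re, one_div, inv_inv]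

lemma tsum_indicator_dvd_moebius_div_pow {p : ℕ} (hp : p.Prime) (hk : 1 < k) :
    ∑' n, {n | p ∣ n}.indicator (fun n : ℕ => (μ n : ℝ) / n ^ k) n
      = -(∑' n : ℕ, (μ n : ℝ) / n ^ k) / (p ^ k - 1) := by
  set f : ℕ → ℝ := fun n => (μ n : ℝ) / n ^ k with hf
  have hsum : Summable f := summable_moebius_div_pow hk
  have hp0 : (p : ℝ) ≠ 0 := by exact_mod_cast hp.ne_zero
  have hpk : (p : ℝ) ^ k - 1 ≠ 0 :=
    (sub_pos.mpr (one_lt_pow₀ (by exact_mod_cast hp.one_lt) (by lia))).ne'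
  have hterm (m : ℕ) : f (p * m) = -(1 / (p : ℝ) ^ k) * (f m - {n | p ∣ n}.indicator f m) := by
    by_cases hpm : p ∣ m
    · simp [hf, moebius_prime_mul hp, hpm]
    · simp only [hf, moebius_prime_mul hp, hpm, if_false, Set.indicator, Set.mem_ofPred_eq,
        Int.cast_neg, Nat.cast_mul, mul_pow]
      ring
  have hself : ∑' n, {n | p ∣ n}.indicator f n
      = -(1 / (p : ℝ) ^ k) * (∑' n, f n - ∑' n, {n | p ∣ n}.indicator f n) := by
    have hinj : Function.Injective (p * ·) := mul_right_injective₀ hp.ne_zero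
    have hsupport : Function.support ({n | p ∣ n}.indicator f) ⊆ Set.range (p * ·) := by
      rintro n hn
      obtain ⟨m, rfl⟩ := Set.mem_of_indicator_ne_zero hn
      exact ⟨m, rfl⟩
    rw [← hsum.tsum_sub (hsum.indicator _), ← tsum_mul_left, ← hinj.tsum_eq hsupport]
    refine tsum_congr fun m => ?_
    have hmem : p * m ∈ {n | p ∣ n} := dvd_mul_right p m
    exact (Set.indicator_of_mem hmem f).trans (hterm m)
  field_simp at hself ⊢
  linear_combination hself

end Moebius

lemma hasSum_moebius_mul_discDensity {p k : ℕ} (hp : p.Prime) (hk : 1 < k) :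
    HasSum (fun d : ℕ => (μ d : ℝ) * (discDensity p d / d ^ k))
      ((p ^ k - p) / p ^ (k + 1) * (p ^ k / (p ^ k - 1)) * (1 / (riemannZeta k).re)) := by
  have hsum := summable_moebius_div_pow hk
  have hp0 : (p : ℝ) ≠ 0 := by exact_mod_cast hp.ne_zero
  have hpk : (p : ℝ) ^ k - 1 ≠ 0 :=
    (sub_pos.mpr (one_lt_pow₀ (by exact_mod_cast hp.one_lt) (by lia))).ne'
  have hterm (d : ℕ) : (μ d : ℝ) * (discDensity p d / d ^ k) = 1 / p * ((μ d : ℝ) / d ^ k)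
      + (1 - 1 / p) * {n | p ∣ n}.indicator (fun n : ℕ => (μ n : ℝ) / n ^ k) d := by
    by_cases hpd : p ∣ d <;>
      simp only [discDensity, hpd, if_true, if_false, Set.indicator, Set.mem_ofPred_eq] <;> ring
  have h := (hsum.hasSum.mul_left (1 / (p : ℝ))).add
    ((hsum.indicator {n | p ∣ n}).hasSum.mul_left (1 - 1 / (p : ℝ)))
  rw [tsum_indicator_dvd_moebius_div_pow hp hk, tsum_moebius_div_pow hk] at h
  have hvalue : ((p : ℝ) ^ k - p) / p ^ (k + 1) * (p ^ k / (p ^ k - 1)) * (1 / (riemannZeta k).re)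
      = 1 / p * (1 / (riemannZeta k).re)
        + (1 - 1 / p) * (-(1 / (riemannZeta k).re) / (p ^ k - 1)) := by
    field_simp
    ring
  simp_rw [hterm, hvalue]
  exact h

lemma abs_card_badPairs_weightedGCD_eq_one_sub_le {p : ℕ} (hp : p.Prime) {z : ℝ} (hz : 0 ≤ z) :
    |(#{x ∈ badPairs p z | weightedGCD x = 1} : ℝ)
        - 4 * z ^ 5 * (((p : ℝ) ^ 10 - p) / p ^ 11 * (p ^ 10 / (p ^ 10 - 1))
          * (1 / (riemannZeta 10).re))|
      ≤ 13 * p * z ^ 3 * ∑' d : ℕ, 1 / (d : ℝ) ^ 6 := by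
  have hcount := hasSum_moebius_mul_card_dvd (badPairs p z) (n := weightedGCD)
    fun x hx => weightedGCD_ne_zero (mem_badPairs.mp hx).2.2
  have hmain := (hasSum_moebius_mul_discDensity hp (k := 10) (by norm_num)).mul_left (4 * z ^ 5)
  have herror := (Real.summable_one_div_nat_pow.mpr (by norm_num : 1 < 6)).hasSum.mul_left
    (13 * p * z ^ 3)
  refine (hcount.sub hmain).norm_le_of_bounded herror fun d => ?_
  rcases eq_or_ne d 0 with rfl | hd
  · simp
  · rw [mul_left_comm, ← mul_sub, norm_mul]
    exact (mul_le_of_le_one_left (norm_nonneg _) (abs_moebius_real_le_one d)).trans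
      (abs_card_badPairs_dvd_weightedGCD_sub_le hp hd hz)

lemma setOf_mem_Efam_dvd_eq (p : ℕ) {z : ℝ} (hz : 0 ≤ z) :
    {x ∈ Efam (z ^ 6) | (p : ℤ) ∣ cubicDisc x}
      = ({x ∈ badPairs p z | weightedGCD x = 1 ∧ cubicDisc x ≠ 0} : Finset (ℤ × ℤ)) := by
  ext x
  have hEfam : x ∈ Efam (z ^ 6) ↔ cubicDisc x ≠ 0 ∧ x ∈ heightBox z ∧ CondM x.1 x.2 :=
    and_congr_right fun _ => and_congr_left fun _ => height_le_pow_six_iff hz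
  have hne (h : cubicDisc x ≠ 0) : x ≠ 0 := by
    rintro rfl
    exact h (by simp [cubicDisc])
  have hcond (h : cubicDisc x ≠ 0) := condM_iff_weightedGCD_eq_one (hne h)
  simp only [Set.mem_ofPred_eq, hEfam, coe_filter, mem_badPairs]
  tauto

lemma abs_ncard_Efam_dvd_sub_le {p : ℕ} (hp : p.Prime) {z : ℝ} (hz : 0 ≤ z) :
    |({x ∈ Efam (z ^ 6) | (p : ℤ) ∣ cubicDisc x}.ncard : ℝ)
        - ((p : ℝ) ^ 10 - p) / p ^ 11 * (p ^ 10 / (p ^ 10 - 1)) * (4 / (riemannZeta 10).re) * z ^ 5|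
      ≤ (13 * ∑' d : ℕ, 1 / (d : ℝ) ^ 6 + 2) * p * z ^ 3 := by
  have hp1 : (1 : ℝ) ≤ p := by exact_mod_cast hp.one_le
  have hbad := abs_card_badPairs_weightedGCD_eq_one_sub_le hp hz
  have hsplit : (#{x ∈ badPairs p z | weightedGCD x = 1 ∧ cubicDisc x = 0} : ℝ)
      + #{x ∈ badPairs p z | weightedGCD x = 1 ∧ cubicDisc x ≠ 0}
      = #{x ∈ badPairs p z | weightedGCD x = 1} := by
    simp only [← filter_filter]
    exact_mod_cast card_filter_add_card_filter_not (cubicDisc · = 0)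
  have hsingular : (#{x ∈ badPairs p z | weightedGCD x = 1 ∧ cubicDisc x = 0} : ℝ)
      ≤ 2 * z ^ 3 := by
    refine le_trans ?_ (card_cubicDisc_eq_zero_ne_zero_le hz)
    exact_mod_cast card_le_card fun x => by
      simp only [mem_filter, mem_badPairs]
      tauto
  have hpz : z ^ 3 ≤ p * z ^ 3 := le_mul_of_one_le_left (by positivity) hp1
  have hmain : ((p : ℝ) ^ 10 - p) / p ^ 11 * (p ^ 10 / (p ^ 10 - 1)) * (4 / (riemannZeta 10).re)
      * z ^ 5 = 4 * z ^ 5 * (((p : ℝ) ^ 10 - p) / p ^ 11 * (p ^ 10 / (p ^ 10 - 1))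
        * (1 / (riemannZeta 10).re)) := by ring
  have herror : (13 * ∑' d : ℕ, 1 / (d : ℝ) ^ 6 + 2) * p * z ^ 3
      = 13 * p * z ^ 3 * ∑' d : ℕ, 1 / (d : ℝ) ^ 6 + 2 * (p * z ^ 3) := by ring
  rw [setOf_mem_Efam_dvd_eq p hz, Set.ncard_coe_finset, hmain, herror]
  have hnonneg : (0 : ℝ) ≤ #{x ∈ badPairs p z | weightedGCD x = 1 ∧ cubicDisc x = 0} :=
    Nat.cast_nonneg _
  rw [abs_le] at hbad ⊢
  constructor <;> linarith

theorem stmt_13_general :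
    ∃ K : ℝ, 0 < K ∧ ∀ p : ℕ, p.Prime → ∀ X : ℝ, 0 ≤ X →
      |({AB ∈ Efam X | (p : ℤ) ∣ (4 * AB.1 ^ 3 + 27 * AB.2 ^ 2)}.ncard : ℝ)
          - (((p : ℝ) ^ 10 - p) / (p : ℝ) ^ 11) * ((p : ℝ) ^ 10 / ((p : ℝ) ^ 10 - 1))
            * (4 / (riemannZeta 10).re) * X ^ ((5 : ℝ) / 6)|
        ≤ K * (p : ℝ) * X ^ ((1 : ℝ) / 2) := by
  refine ⟨13 * ∑' d : ℕ, 1 / (d : ℝ) ^ 6 + 2, by positivity, fun p hp X hX => ?_⟩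
  obtain ⟨z, hz, rfl⟩ : ∃ z : ℝ, 0 ≤ z ∧ z ^ 6 = X :=
    ⟨X ^ ((6 : ℕ) : ℝ)⁻¹, by positivity, Real.rpow_inv_natCast_pow hX (by norm_num)⟩
  have hfive : (z ^ 6) ^ ((5 : ℝ) / 6) = z ^ 5 := by
    rw [← Real.rpow_natCast_mul hz, ← Real.rpow_natCast]
    norm_num
  have hthree : (z ^ 6) ^ ((1 : ℝ) / 2) = z ^ 3 := by
    rw [← Real.rpow_natCast_mul hz, ← Real.rpow_natCast]
    norm_num
  rw [hfive, hthree]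
  exact abs_ncard_Efam_dvd_sub_le hp hz

theorem stmt_13 :
    ∃ K : ℝ, 0 < K ∧ ∀ (p : ℕ), p.Prime → 5 ≤ p → ∀ (X : ℝ), (p : ℝ) ^ 3 ≤ X →
      |({AB ∈ Efam X | (p : ℤ) ∣ (4 * AB.1 ^ 3 + 27 * AB.2 ^ 2)}.ncard : ℝ)
          - (((p : ℝ) ^ 10 - p) / (p : ℝ) ^ 11) * ((p : ℝ) ^ 10 / ((p : ℝ) ^ 10 - 1))
            * (4 / (riemannZeta 10).re) * X ^ ((5 : ℝ) / 6)|
        ≤ K * (p : ℝ) * X ^ ((1 : ℝ) / 2) := by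
  obtain ⟨K, hK, hbound⟩ := stmt_13_general
  exact ⟨K, hK, fun p hp _ X hX => hbound p hp X (le_trans (by positivity) hX)⟩
end

section
/- There is an absolute constant K such that for every prime p ≥ 5 and every real X with p³ ≤ X, the number of pairs (A,B) ∈ E(X) with p ∣ 4A³+27B², p ∤ A, and −18AB a nonzero square modulo p (i.e. the elliptic curves y² = x³+Ax+B in the family with split multiplicative reduction at p) differs from ((p−1)/(2p²))·(p^{10}/(p^{10}−1))·(4/ζ(10))·X^{5/6} by at most K·X^{1/2}, where ζ is the Riemann zeta function. -/
/-!
Put `X = y ^ 12`, so that the height condition reads `|A| ≤ y ^ 4`, `|B| ≤ y ^ 6`. Splitness at `p`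
means `(A, B) ≡ (-27 s ^ 4, 54 s ^ 6)` modulo `p` for some unit `s`, which is then unique up to
sign, so twice the number of split pairs in the box is a sum over `s` of products of residue counts
in intervals. Replacing these counts by their densities costs only `O(y ^ 6)`, uniformly in `p` and
`y`: the error of the `B`-count is summed against the `A`-counts, and since each nonzero `A` arises
from at most four `s`, these add up to `O(y ^ 4)`. As the condition is invariant under
`(A, B) ↦ (d ^ 4 A, d ^ 6 B)` for `d` prime to `p`, Möbius inversion over the boxes of scale `y / d`
imposes condition (M): the errors sum to `O(y ^ 6)`, and the densities to
`∑ μ(d) d ^ (-10)` over `d` prime to `p`, that is `((1 - p ^ (-10)) ζ(10))⁻¹`. Pairs of discriminant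
zero are determined by `B`, so there are only `O(y ^ 6)` of them.
-/

open ArithmeticFunction
open scoped ArithmeticFunction.Moebius Finset

/-! ### Integers in symmetric intervals -/

/-- The integers `a` with `|a| ≤ u`; empty when `u < 0`. -/
noncomputable def symmInterval (u : ℝ) : Finset ℤ := Finset.Icc (-⌊u⌋) ⌊u⌋

lemma mem_symmInterval {u : ℝ} {a : ℤ} : a ∈ symmInterval u ↔ |(a : ℝ)| ≤ u := by
  rw [symmInterval, Finset.mem_Icc, ← abs_le, Int.le_floor, Int.cast_abs]

lemma card_symmInterval_erase_zero_le {u : ℝ} (hu : 0 ≤ u) :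
    (#((symmInterval u).erase 0) : ℝ) ≤ 2 * u := by
  have floor_nonneg : 0 ≤ ⌊u⌋ := Int.floor_nonneg.2 hu
  have card_eq : (#((symmInterval u).erase 0) : ℤ) = 2 * ⌊u⌋ := by
    rw [Finset.card_erase_of_mem (mem_symmInterval.2 (by simpa using hu)), symmInterval,
      Int.card_Icc]
    omega
  calc (#((symmInterval u).erase 0) : ℝ) = 2 * ⌊u⌋ := mod_cast card_eq
    _ ≤ 2 * u := by gcongr; exact Int.floor_le u

lemma card_symmInterval_pow_erase_zero_le {y : ℝ} (hy : 0 ≤ y) {m n : ℕ} (hm : m ≠ 0)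
    (hmn : m ≤ n) : (#((symmInterval (y ^ m)).erase 0) : ℝ) ≤ 2 * y ^ n := by
  have subset : (symmInterval (y ^ m)).erase 0 ⊆ (symmInterval (y ^ n)).erase 0 := by
    intro a ha
    rw [Finset.mem_erase, mem_symmInterval] at ha ⊢
    have one_le_abs : (1 : ℝ) ≤ |(a : ℝ)| := mod_cast Int.one_le_abs ha.1
    have one_le : 1 ≤ y := (one_le_pow_iff_of_nonneg hy hm).1 (one_le_abs.trans ha.2)
    exact ⟨ha.1, ha.2.trans (pow_le_pow_right₀ one_le hmn)⟩
  calc (#((symmInterval (y ^ m)).erase 0) : ℝ) ≤ #((symmInterval (y ^ n)).erase 0) :=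
        mod_cast Finset.card_le_card subset
    _ ≤ 2 * y ^ n := card_symmInterval_erase_zero_le (pow_nonneg hy n)

/-- The integers `a` with `|a| ≤ u` in the residue class `r`. -/
noncomputable def symmIntervalResidue (n : ℕ) (u : ℝ) (r : ZMod n) : Finset ℤ :=
  {a ∈ symmInterval u | (a : ZMod n) = r}

lemma card_symmIntervalResidue {n : ℕ} (hn : n ≠ 0) (u : ℝ) (r : ℤ) :
    #(symmIntervalResidue n u r) = #(Finset.Icc ⌈(-u - r) / n⌉ ⌊(u - r) / n⌋) := by
  have n_pos : (0 : ℝ) < n := mod_cast Nat.pos_of_ne_zero hn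
  have mem_iff (k : ℤ) :
      k ∈ Finset.Icc ⌈(-u - r) / n⌉ ⌊(u - r) / n⌋ ↔ |((r + n * k : ℤ) : ℝ)| ≤ u := by
    rw [Finset.mem_Icc, Int.ceil_le, Int.le_floor, div_le_iff₀ n_pos, le_div_iff₀ n_pos, abs_le]
    push_cast
    constructor <;> rintro ⟨h₁, h₂⟩ <;> constructor <;> linarith
  symm
  refine Finset.card_bij (fun k _ ↦ r + n * k) (fun k hk ↦ ?_) (fun k _ l _ h ↦ ?_) fun a ha ↦ ?_
  · simpa [symmIntervalResidue, mem_symmInterval] using (mem_iff k).1 hk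
  · simpa [hn] using h
  · rw [symmIntervalResidue, Finset.mem_filter, mem_symmInterval, ← sub_eq_zero, ← Int.cast_sub,
      ZMod.intCast_zmod_eq_zero_iff_dvd] at ha
    obtain ⟨ha, k, hk⟩ := ha
    obtain rfl : a = r + n * k := by linarith
    exact ⟨k, (mem_iff k).2 ha, rfl⟩

lemma abs_card_symmIntervalResidue_sub_le {n : ℕ} (hn : n ≠ 0) {u : ℝ} (hu : 0 ≤ u) (r : ZMod n) :
    |(#(symmIntervalResidue n u r) : ℝ) - 2 * u / n| ≤ 1 := by
  obtain ⟨r, rfl⟩ := ZMod.intCast_surjective r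
  rw [card_symmIntervalResidue hn]
  set lower : ℝ := (-u - r) / n with lower_def
  set upper : ℝ := (u - r) / n with upper_def
  have length_eq : 2 * u / n = upper - lower := by rw [lower_def, upper_def]; ring
  have length_nonneg : 0 ≤ upper - lower := by rw [← length_eq]; positivity
  have ceil_le : ⌈lower⌉ ≤ ⌊upper⌋ + 1 := by
    refine Int.ceil_le.2 ?_
    push_cast
    linarith [Int.lt_floor_add_one upper]
  have card_eq : (#(Finset.Icc ⌈lower⌉ ⌊upper⌋) : ℝ) = ⌊upper⌋ + 1 - ⌈lower⌉ := by
    exact_mod_cast Int.card_Icc_of_le _ _ ceil_le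
  rw [card_eq, length_eq, abs_le]
  constructor <;> linarith [Int.floor_le upper, Int.lt_floor_add_one upper, Int.le_ceil lower,
    Int.ceil_lt_add_one lower]

lemma sum_card_symmIntervalResidue_le {ι : Type*} {n m : ℕ} (S : Finset ι) (f : ι → ZMod n) (u : ℝ)
    (f_ne_zero : ∀ i ∈ S, f i ≠ 0) (fiber_le : ∀ r, #{i ∈ S | f i = r} ≤ m) :
    ∑ i ∈ S, #(symmIntervalResidue n u (f i)) ≤ m * #((symmInterval u).erase 0) := by
  have residue_eq : ∀ i ∈ S, symmIntervalResidue n u (f i) =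
      ((symmInterval u).erase 0).bipartiteAbove (fun i (a : ℤ) ↦ f i = a) i := by
    intro i hi
    ext a
    simp only [symmIntervalResidue, Finset.bipartiteAbove, Finset.mem_filter, Finset.mem_erase]
    have a_ne_zero (h : (a : ZMod n) = f i) : a ≠ 0 := by
      rintro rfl
      exact f_ne_zero i hi (by simpa using h.symm)
    grind
  calc ∑ i ∈ S, #(symmIntervalResidue n u (f i))
      = ∑ a ∈ (symmInterval u).erase 0, #{i ∈ S | f i = a} := by
        rw [Finset.sum_congr rfl fun i hi ↦ congrArg _ (residue_eq i hi),
          Finset.sum_card_bipartiteAbove_eq_sum_card_bipartiteBelow]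
        rfl
    _ ≤ ∑ _a ∈ (symmInterval u).erase 0, m := Finset.sum_le_sum fun a _ ↦ fiber_le a
    _ = m * #((symmInterval u).erase 0) := by rw [Finset.sum_const, smul_eq_mul, mul_comm]

lemma abs_sum_mul_sub_le {ι : Type*} (S : Finset ι) {a b : ι → ℝ} {x z η ε : ℝ}
    (a_nonneg : ∀ i ∈ S, 0 ≤ a i) (z_nonneg : 0 ≤ z) (ha : ∀ i ∈ S, |a i - x| ≤ η)
    (hb : ∀ i ∈ S, |b i - z| ≤ ε) :
    |∑ i ∈ S, a i * b i - #S * (x * z)| ≤ ε * ∑ i ∈ S, a i + #S * (η * z) := by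
  have split_eq : ∑ i ∈ S, a i * b i - #S * (x * z) =
      ∑ i ∈ S, (a i * (b i - z) + (a i - x) * z) := by
    rw [← nsmul_eq_mul, ← Finset.sum_const, ← Finset.sum_sub_distrib]
    exact Finset.sum_congr rfl fun i _ ↦ by ring
  calc |∑ i ∈ S, a i * b i - #S * (x * z)| ≤ ∑ i ∈ S, |a i * (b i - z) + (a i - x) * z| := by
        rw [split_eq]
        exact Finset.abs_sum_le_sum_abs _ _
    _ ≤ ∑ i ∈ S, (ε * a i + η * z) := by
        refine Finset.sum_le_sum fun i hi ↦ (abs_add_le _ _).trans ?_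
        rw [abs_mul, abs_mul, abs_of_nonneg (a_nonneg i hi), abs_of_nonneg z_nonneg, mul_comm ε]
        gcongr
        exacts [a_nonneg i hi, hb i hi, ha i hi]
    _ = ε * ∑ i ∈ S, a i + #S * (η * z) := by
        rw [Finset.sum_add_distrib, ← Finset.mul_sum, Finset.sum_const, nsmul_eq_mul]

/-! ### The split condition -/

section Field

variable {K : Type*} [Field K]

/-- With `-18ab = r ^ 2`, the parameter is `s = r / (6a)`, and the node `-3b / (2a)` is `3s ^ 2`. -/
lemma disc_eq_zero_and_isSquare_iff (h₂ : (2 : K) ≠ 0) (h₃ : (3 : K) ≠ 0) (a b : K) :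
    (4 * a ^ 3 + 27 * b ^ 2 = 0 ∧ a ≠ 0 ∧ -18 * a * b ≠ 0 ∧ IsSquare (-18 * a * b)) ↔
      ∃ s ≠ 0, -27 * s ^ 4 = a ∧ 54 * s ^ 6 = b := by
  have h₆ : (6 : K) ≠ 0 := by
    rw [show (6 : K) = 2 * 3 by norm_num]
    exact mul_ne_zero h₂ h₃
  constructor
  · rintro ⟨disc, a_ne, ab_ne, r, hr⟩
    have r_ne : r ≠ 0 := by
      rintro rfl
      exact ab_ne (by rw [hr, mul_zero])
    have param_sq : (r / (6 * a)) ^ 2 = -b / (2 * a) := by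
      rw [div_pow, sq r, ← hr]
      field_simp
      ring
    refine ⟨r / (6 * a), div_ne_zero r_ne (mul_ne_zero h₆ a_ne), ?_, ?_⟩
    · rw [pow_mul (r / (6 * a)) 2 2, param_sq]
      field_simp
      linear_combination -disc
    · rw [pow_mul (r / (6 * a)) 2 3, param_sq]
      field_simp
      linear_combination -2 * b * disc
  · rintro ⟨s, s_ne, rfl, rfl⟩
    have a_eq : -27 * s ^ 4 = -(3 ^ 3 * s ^ 4) := by ring
    have ab_eq : -18 * (-27 * s ^ 4) * (54 * s ^ 6) = 2 ^ 2 * 3 ^ 8 * s ^ 10 := by ring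
    refine ⟨by ring, ?_, ?_, 162 * s ^ 5, by ring⟩
    · simp [a_eq, h₃, s_ne]
    · rw [ab_eq]
      simp [h₂, h₃, s_ne]

lemma neg_twenty_seven_ne_zero (h₃ : (3 : K) ≠ 0) : (-27 : K) ≠ 0 := by
  rw [show (-27 : K) = -3 ^ 3 by norm_num]
  exact neg_ne_zero.2 (pow_ne_zero 3 h₃)

lemma param_eq_param_iff (h₂ : (2 : K) ≠ 0) (h₃ : (3 : K) ≠ 0) {s t : K} (ht : t ≠ 0) :
    -27 * s ^ 4 = -27 * t ^ 4 ∧ 54 * s ^ 6 = 54 * t ^ 6 ↔ s = t ∨ s = -t := by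
  rw [← sq_eq_sq_iff_eq_or_eq_neg]
  refine ⟨fun ⟨h₄, h₆⟩ ↦ ?_, fun h ↦ ?_⟩
  · have coeff_ne : -2 * (-27 * t ^ 4) ≠ 0 :=
      mul_ne_zero (neg_ne_zero.2 h₂) (mul_ne_zero (neg_twenty_seven_ne_zero h₃) (pow_ne_zero 4 ht))
    exact mul_left_cancel₀ coeff_ne (by linear_combination h₆ + 2 * s ^ 2 * h₄)
  · rw [pow_mul s 2 2, pow_mul s 2 3, h]
    constructor <;> ring

lemma card_filter_mul_pow_eq_le [Fintype K] [DecidableEq K] {c : K} (hc : c ≠ 0) {k : ℕ}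
    (hk : 0 < k) (r : K) : #{s : K | c * s ^ k = r} ≤ k := by
  calc #{s : K | c * s ^ k = r} ≤ #(Polynomial.nthRoots k (r / c)).toFinset := by
        refine Finset.card_le_card fun s hs ↦ ?_
        rw [Multiset.mem_toFinset, Polynomial.mem_nthRoots hk, eq_div_iff hc, mul_comm]
        simpa using hs
    _ ≤ k := (Multiset.toFinset_card_le _).trans (Polynomial.card_nthRoots _ _)

end Field

/-- For a prime `p ≥ 5`, split multiplicative reduction at `p` of `y² = x³ + Ax + B`:
the tangent slopes at the node are rational if and only if `-18AB` is a square modulo `p`. -/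
def IsSplitAt (p : ℕ) (A B : ℤ) : Prop :=
  (p : ℤ) ∣ (4 * A ^ 3 + 27 * B ^ 2) ∧ ¬ (p : ℤ) ∣ A ∧
    ((-18 * A * B : ℤ) : ZMod p) ≠ 0 ∧ IsSquare ((-18 * A * B : ℤ) : ZMod p)

lemma natCast_zmod_ne_zero {n p : ℕ} (hn : n ≠ 0) (hnp : n < p) : (n : ZMod p) ≠ 0 := fun h ↦
  hn (Nat.eq_zero_of_dvd_of_lt ((ZMod.natCast_eq_zero_iff n p).1 h) hnp)

lemma two_ne_zero_zmod {p : ℕ} (hp : 2 < p) : (2 : ZMod p) ≠ 0 :=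
  mod_cast natCast_zmod_ne_zero two_ne_zero hp

lemma three_ne_zero_zmod {p : ℕ} (hp : 3 < p) : (3 : ZMod p) ≠ 0 :=
  mod_cast natCast_zmod_ne_zero three_ne_zero hp

section Prime

variable {p : ℕ} [Fact p.Prime]

lemma isSplitAt_iff_exists_param (hp : 5 ≤ p) {A B : ℤ} :
    IsSplitAt p A B ↔ ∃ s : ZMod p, s ≠ 0 ∧ -27 * s ^ 4 = A ∧ 54 * s ^ 6 = B := by
  rw [← disc_eq_zero_and_isSquare_iff (two_ne_zero_zmod (by omega))
    (three_ne_zero_zmod (by omega)), IsSplitAt, ← ZMod.intCast_zmod_eq_zero_iff_dvd,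
    ← ZMod.intCast_zmod_eq_zero_iff_dvd]
  push_cast
  rfl

lemma isSplitAt_pow_mul_iff (hp : 5 ≤ p) {d : ℕ} (hd : ¬ p ∣ d) {A B : ℤ} :
    IsSplitAt p ((d : ℤ) ^ 4 * A) ((d : ℤ) ^ 6 * B) ↔ IsSplitAt p A B := by
  have d_ne : (d : ZMod p) ≠ 0 := by rwa [Ne, ZMod.natCast_eq_zero_iff]
  rw [isSplitAt_iff_exists_param hp, isSplitAt_iff_exists_param hp]
  push_cast
  constructor
  · rintro ⟨s, s_ne, hA, hB⟩
    refine ⟨s / d, div_ne_zero s_ne d_ne, ?_, ?_⟩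
    · field_simp
      linear_combination hA
    · field_simp
      linear_combination hB
  · rintro ⟨s, s_ne, hA, hB⟩
    exact ⟨d * s, mul_ne_zero d_ne s_ne, by rw [← hA]; ring, by rw [← hB]; ring⟩

end Prime

lemma IsSplitAt.left_ne_zero {p : ℕ} {A B : ℤ} (h : IsSplitAt p A B) : A ≠ 0 := by
  rintro rfl
  exact h.2.1 (dvd_zero _)

lemma IsSplitAt.right_ne_zero {p : ℕ} {A B : ℤ} (h : IsSplitAt p A B) : B ≠ 0 := by
  rintro rfl
  exact h.2.2.1 (by simp)

/-! ### Split pairs in a weighted box -/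

open Classical in
/-- The pairs that are split at `p` in the box `|A| ≤ y ^ 4`, `|B| ≤ y ^ 6`, that is, of height
at most `y ^ 12`. -/
noncomputable def splitBox (p : ℕ) (y : ℝ) : Finset (ℤ × ℤ) :=
  {AB ∈ symmInterval (y ^ 4) ×ˢ symmInterval (y ^ 6) | IsSplitAt p AB.1 AB.2}

lemma mem_splitBox {p : ℕ} {y : ℝ} {A B : ℤ} :
    (A, B) ∈ splitBox p y ↔ |(A : ℝ)| ≤ y ^ 4 ∧ |(B : ℝ)| ≤ y ^ 6 ∧ IsSplitAt p A B := by
  simp only [splitBox, Finset.mem_filter, Finset.mem_product, mem_symmInterval, and_assoc]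

section Prime

variable {p : ℕ} [Fact p.Prime]

lemma card_filter_param_eq_two (hp : 5 ≤ p) {A B : ℤ} (h : IsSplitAt p A B) :
    #{s ∈ ({0}ᶜ : Finset (ZMod p)) | -27 * s ^ 4 = (A : ZMod p) ∧ 54 * s ^ 6 = (B : ZMod p)} =
      2 := by
  obtain ⟨t, t_ne, hA, hB⟩ := (isSplitAt_iff_exists_param hp).1 h
  have two_ne_zero : (2 : ZMod p) ≠ 0 := two_ne_zero_zmod (by omega)
  have three_ne_zero : (3 : ZMod p) ≠ 0 := three_ne_zero_zmod (by omega)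
  rw [← Finset.card_pair (show t ≠ -t by grind)]
  congr 1
  ext s
  rw [Finset.mem_filter, ← hA, ← hB, param_eq_param_iff two_ne_zero three_ne_zero t_ne,
    Finset.mem_compl, Finset.mem_insert, Finset.mem_singleton, Finset.mem_singleton]
  refine ⟨And.right, fun h ↦ ⟨?_, h⟩⟩
  rcases h with rfl | rfl
  exacts [t_ne, neg_ne_zero.2 t_ne]

lemma two_mul_card_splitBox (hp : 5 ≤ p) (y : ℝ) :
    2 * #(splitBox p y) = ∑ s ∈ ({0}ᶜ : Finset (ZMod p)),
      #(symmIntervalResidue p (y ^ 4) (-27 * s ^ 4)) *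
        #(symmIntervalResidue p (y ^ 6) (54 * s ^ 6)) := by
  let IsParam (s : ZMod p) (AB : ℤ × ℤ) : Prop := -27 * s ^ 4 = AB.1 ∧ 54 * s ^ 6 = AB.2
  have residue_prod_eq : ∀ s ∈ ({0}ᶜ : Finset (ZMod p)),
      symmIntervalResidue p (y ^ 4) (-27 * s ^ 4) ×ˢ symmIntervalResidue p (y ^ 6) (54 * s ^ 6) =
        (splitBox p y).bipartiteAbove IsParam s := by
    rintro s hs
    ext ⟨A, B⟩
    have isSplitAt_of_param (h : -27 * s ^ 4 = A ∧ 54 * s ^ 6 = B) : IsSplitAt p A B :=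
      (isSplitAt_iff_exists_param hp).2 ⟨s, by simpa using hs, h⟩
    simp only [symmIntervalResidue, Finset.mem_product, Finset.mem_filter, mem_symmInterval,
      Finset.mem_bipartiteAbove, mem_splitBox, IsParam]
    grind
  classical
  calc 2 * #(splitBox p y)
      = ∑ AB ∈ splitBox p y, #(({0}ᶜ : Finset (ZMod p)).bipartiteBelow IsParam AB) := by
        rw [mul_comm, Finset.sum_const_nat fun AB hAB ↦ ?_]
        rw [← card_filter_param_eq_two hp (mem_splitBox.1 hAB).2.2, Finset.bipartiteBelow]
    _ = _ := by
        rw [← Finset.sum_card_bipartiteAbove_eq_sum_card_bipartiteBelow]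
        refine Finset.sum_congr rfl fun s hs ↦ ?_
        rw [← residue_prod_eq s hs, Finset.card_product]

lemma sum_card_residue_pow_four_le (hp : 5 ≤ p) {y : ℝ} (hy : 0 ≤ y) :
    ∑ s ∈ ({0}ᶜ : Finset (ZMod p)), (#(symmIntervalResidue p (y ^ 4) (-27 * s ^ 4)) : ℝ) ≤
      8 * y ^ 6 := by
  have coeff_ne : (-27 : ZMod p) ≠ 0 := neg_twenty_seven_ne_zero (three_ne_zero_zmod (by omega))
  have sum_le : ∑ s ∈ ({0}ᶜ : Finset (ZMod p)), #(symmIntervalResidue p (y ^ 4) (-27 * s ^ 4)) ≤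
      4 * #((symmInterval (y ^ 4)).erase 0) := by
    refine sum_card_symmIntervalResidue_le _ _ _ (fun s hs ↦ ?_) fun r ↦ ?_
    · exact mul_ne_zero coeff_ne (pow_ne_zero 4 (by simpa using hs))
    · exact (Finset.card_le_card (Finset.filter_subset_filter _ (Finset.subset_univ _))).trans
        (card_filter_mul_pow_eq_le coeff_ne (by norm_num) r)
  calc ∑ s ∈ ({0}ᶜ : Finset (ZMod p)), (#(symmIntervalResidue p (y ^ 4) (-27 * s ^ 4)) : ℝ)
      ≤ 4 * #((symmInterval (y ^ 4)).erase 0) := mod_cast sum_le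
    _ ≤ 4 * (2 * y ^ 6) := by
        gcongr
        exact card_symmInterval_pow_erase_zero_le hy four_ne_zero (by norm_num)
    _ = 8 * y ^ 6 := by ring

lemma abs_card_splitBox_sub_le (hp : 5 ≤ p) {y : ℝ} (hy : 0 ≤ y) :
    |(#(splitBox p y) : ℝ) - ((p : ℝ) - 1) / (2 * (p : ℝ) ^ 2) * 4 * y ^ 10| ≤ 5 * y ^ 6 := by
  have p_ne : p ≠ 0 := by omega
  have card_units : (#({0}ᶜ : Finset (ZMod p)) : ℝ) = p - 1 := by
    rw [Finset.card_compl, ZMod.card, Finset.card_singleton,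
      Nat.cast_pred (Nat.pos_of_ne_zero p_ne)]
  have card_eq : 2 * (#(splitBox p y) : ℝ) = ∑ s ∈ ({0}ᶜ : Finset (ZMod p)),
      (#(symmIntervalResidue p (y ^ 4) (-27 * s ^ 4)) : ℝ) *
        #(symmIntervalResidue p (y ^ 6) (54 * s ^ 6)) := mod_cast two_mul_card_splitBox hp y
  have approx := abs_sum_mul_sub_le ({0}ᶜ : Finset (ZMod p))
    (a := fun s ↦ (#(symmIntervalResidue p (y ^ 4) (-27 * s ^ 4)) : ℝ))
    (b := fun s ↦ (#(symmIntervalResidue p (y ^ 6) (54 * s ^ 6)) : ℝ))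
    (x := 2 * y ^ 4 / p) (z := 2 * y ^ 6 / p) (fun _ _ ↦ by positivity) (by positivity)
    (fun _ _ ↦ abs_card_symmIntervalResidue_sub_le p_ne (by positivity) _)
    (fun _ _ ↦ abs_card_symmIntervalResidue_sub_le p_ne (by positivity) _)
  rw [← card_eq, card_units] at approx
  have main_eq : ((p : ℝ) - 1) * (2 * y ^ 4 / p * (2 * y ^ 6 / p)) =
      2 * (((p : ℝ) - 1) / (2 * (p : ℝ) ^ 2) * 4 * y ^ 10) := by
    field_simp
    ring
  have density_error : ((p : ℝ) - 1) * (1 * (2 * y ^ 6 / p)) ≤ 2 * y ^ 6 := by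
    calc ((p : ℝ) - 1) * (1 * (2 * y ^ 6 / p)) ≤ p * (1 * (2 * y ^ 6 / p)) := by gcongr; linarith
      _ = 2 * y ^ 6 := by field_simp
  have bound := approx.trans (add_le_add (mul_le_mul_of_nonneg_left
    (sum_card_residue_pow_four_le hp hy) zero_le_one) density_error)
  rw [main_eq, ← mul_sub, abs_mul, abs_two] at bound
  linarith

end Prime

/-! ### The sieve for condition (M) -/

lemma exists_forall_pow_dvd_and_pow_dvd_iff {k l a : ℕ} (hk : k ≠ 0) (ha : a ≠ 0) (b : ℕ) :
    ∃ g ≠ 0, ∀ d, d ^ k ∣ a ∧ d ^ l ∣ b ↔ d ∣ g := by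
  classical
  let P (d : ℕ) : Prop := d ^ k ∣ a ∧ d ^ l ∣ b
  have le_of_P {d : ℕ} (hd : P d) : d ≤ a :=
    (Nat.le_self_pow hk d).trans (Nat.le_of_dvd (Nat.pos_of_ne_zero ha) hd.1)
  have P_lcm {d e : ℕ} (hd : P d) (he : P e) : P (d.lcm e) := by
    simp only [P, ← Nat.pow_lcm_pow]
    exact ⟨Nat.lcm_dvd hd.1 he.1, Nat.lcm_dvd hd.2 he.2⟩
  have P_one : P 1 := by simp [P]
  let g := Nat.findGreatest P a
  have P_g : P g := Nat.findGreatest_spec (le_of_P P_one) P_one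
  have g_pos : 0 < g := Nat.le_findGreatest (le_of_P P_one) P_one
  refine ⟨g, g_pos.ne', fun d ↦ ⟨fun hd ↦ ?_, fun hd ↦ ?_⟩⟩
  · have lcm_le : d.lcm g ≤ g := Nat.le_findGreatest (le_of_P (P_lcm hd P_g)) (P_lcm hd P_g)
    have d_pos : 0 < d := Nat.pos_of_ne_zero fun h ↦ ha (by simpa [h, hk] using hd.1)
    have le_lcm : g ≤ d.lcm g := Nat.le_of_dvd (Nat.lcm_pos d_pos g_pos) (Nat.dvd_lcm_right d g)
    exact (lcm_le.antisymm le_lcm) ▸ Nat.dvd_lcm_left d g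
  · exact ⟨(pow_dvd_pow_of_dvd hd k).trans P_g.1, (pow_dvd_pow_of_dvd hd l).trans P_g.2⟩

open Classical in
lemma hasSum_moebius_condM {A B : ℤ} (hA : A ≠ 0) :
    HasSum (fun d : ℕ ↦ if (d : ℤ) ^ 4 ∣ A ∧ (d : ℤ) ^ 6 ∣ B then (μ d : ℝ) else 0)
      (if CondM A B then 1 else 0) := by
  obtain ⟨g, g_ne, hg⟩ := exists_forall_pow_dvd_and_pow_dvd_iff (k := 4) (l := 6) four_ne_zero
    (Int.natAbs_ne_zero.2 hA) B.natAbs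
  have dvd_g_iff (d : ℕ) : (d : ℤ) ^ 4 ∣ A ∧ (d : ℤ) ^ 6 ∣ B ↔ d ∣ g := by
    rw [← hg, ← Int.natCast_dvd, ← Int.natCast_dvd, Nat.cast_pow, Nat.cast_pow]
  have condM_iff : CondM A B ↔ g = 1 := by
    rw [Nat.eq_one_iff_not_exists_prime_dvd]
    exact forall₂_congr fun q _ ↦ by rw [← dvd_g_iff, not_and]
  have sum_divisors : ∑ d ∈ g.divisors, (μ d : ℝ) = if g = 1 then 1 else 0 := by
    rw [← Int.cast_sum, ← coe_mul_zeta_apply, moebius_mul_coe_zeta, one_apply]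
    push_cast
    rfl
  simp only [dvd_g_iff, condM_iff, ← sum_divisors]
  rw [← Finset.sum_congr rfl fun d hd ↦ if_pos (Nat.dvd_of_mem_divisors hd)]
  exact hasSum_sum_of_ne_finset_zero fun d hd ↦ if_neg fun h ↦ hd (Nat.mem_divisors.2 ⟨h, g_ne⟩)

open Classical in
lemma hasSum_moebius_mul_card (S : Finset (ℤ × ℤ)) (hS : ∀ AB ∈ S, AB.1 ≠ 0) :
    HasSum (fun d : ℕ ↦ (μ d : ℝ) * #{AB ∈ S | (d : ℤ) ^ 4 ∣ AB.1 ∧ (d : ℤ) ^ 6 ∣ AB.2})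
      #{AB ∈ S | CondM AB.1 AB.2} := by
  simp only [Finset.natCast_card_filter, Finset.mul_sum, mul_ite, mul_one, mul_zero]
  exact hasSum_sum fun AB hAB ↦ hasSum_moebius_condM (hS AB hAB)

lemma ofReal_riemannZeta_natCast_re {k : ℕ} (hk : 1 < k) :
    ((riemannZeta k).re : ℂ) = riemannZeta k := by
  refine Complex.ext (Complex.ofReal_re _) ?_
  rw [Complex.ofReal_im]
  exact_mod_cast (riemannZeta_im_eq_zero_of_one_lt (x := k) (mod_cast hk)).symm

lemma hasSum_moebius_coprime (N : ℕ) [NeZero N] {k : ℕ} (hk : 1 < k) :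
    HasSum (fun d : ℕ ↦ if d.Coprime N then (μ d : ℝ) / (d : ℝ) ^ k else 0)
      ((∏ q ∈ N.primeFactors, (1 - ((q : ℝ) ^ k)⁻¹)) * (riemannZeta k).re)⁻¹ := by
  have one_lt_re : 1 < (k : ℂ).re := mod_cast hk
  let χ : DirichletCharacter ℂ N := 1
  let χμ : ℕ → ℂ := (fun n : ℕ ↦ χ n) * fun n : ℕ ↦ (μ n : ℂ)
  have L_χμ : LSeries χμ k =
      (((∏ q ∈ N.primeFactors, (1 - ((q : ℝ) ^ k)⁻¹)) * (riemannZeta k).re)⁻¹ : ℝ) := by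
    have L_χ := DirichletCharacter.LFunctionTrivChar_eq_mul_riemannZeta (N := N) (s := k)
      (by exact_mod_cast hk.ne')
    rw [DirichletCharacter.LFunctionTrivChar, DirichletCharacter.LFunction_eq_LSeries _ one_lt_re]
      at L_χ
    rw [eq_inv_of_mul_eq_one_right (DirichletCharacter.LSeries.mul_mu_eq_one χ one_lt_re), L_χ]
    push_cast
    simp only [ofReal_riemannZeta_natCast_re hk, Complex.cpow_neg, Complex.cpow_natCast]
  have term_eq (d : ℕ) : LSeries.term χμ k d =
      ((if d.Coprime N then (μ d : ℝ) / (d : ℝ) ^ k else 0 : ℝ) : ℂ) := by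
    rcases eq_or_ne d 0 with rfl | d_ne
    · simp
    have χ_eq : χ d = if d.Coprime N then 1 else 0 := by
      split_ifs with h
      · exact MulChar.one_apply ((ZMod.isUnit_iff_coprime d N).2 h)
      · exact χ.map_nonunit ((ZMod.isUnit_iff_coprime d N).not.2 h)
    rw [LSeries.term_of_ne_zero d_ne, show χμ d = χ d * μ d from rfl, χ_eq, Complex.cpow_natCast]
    split_ifs <;> simp
  have summable : LSeriesSummable χμ k := DirichletCharacter.LSeriesSummable_mul χ
    (LSeriesSummable_moebius_iff.2 one_lt_re)
  rw [← Complex.hasSum_ofReal, ← L_χμ]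
  simp only [← term_eq]
  exact summable.LSeriesHasSum

open Classical in
lemma filter_pow_dvd_splitBox_eq_empty {p d : ℕ} (hd : p ∣ d) (y : ℝ) :
    ({AB ∈ splitBox p y | (d : ℤ) ^ 4 ∣ AB.1 ∧ (d : ℤ) ^ 6 ∣ AB.2} : Finset (ℤ × ℤ)) = ∅ := by
  refine Finset.filter_eq_empty_iff.2 fun AB hAB h ↦ (mem_splitBox.1 hAB).2.2.2.1 ?_
  exact ((Int.natCast_dvd_natCast.2 hd).trans (dvd_pow_self _ four_ne_zero)).trans h.1

section Prime

variable {p : ℕ} [Fact p.Prime]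

open Classical in
lemma card_filter_pow_dvd_splitBox (hp : 5 ≤ p) {d : ℕ} (hd : ¬ p ∣ d) (y : ℝ) :
    #{AB ∈ splitBox p y | (d : ℤ) ^ 4 ∣ AB.1 ∧ (d : ℤ) ^ 6 ∣ AB.2} = #(splitBox p (y / d)) := by
  have d_ne : d ≠ 0 := fun h ↦ hd (h ▸ dvd_zero p)
  have d_pos : (0 : ℝ) < d := mod_cast Nat.pos_of_ne_zero d_ne
  have abs_le_iff (k : ℕ) (a : ℤ) :
      |(((d : ℤ) ^ k * a : ℤ) : ℝ)| ≤ y ^ k ↔ |(a : ℝ)| ≤ (y / d) ^ k := by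
    push_cast
    rw [abs_mul, abs_of_pos (pow_pos d_pos k), div_pow, le_div_iff₀' (pow_pos d_pos k)]
  have mem_iff (A B : ℤ) : ((d : ℤ) ^ 4 * A, (d : ℤ) ^ 6 * B) ∈ splitBox p y ↔
      (A, B) ∈ splitBox p (y / d) := by
    rw [mem_splitBox, mem_splitBox, abs_le_iff, abs_le_iff, isSplitAt_pow_mul_iff hp hd]
  symm
  refine Finset.card_bij (fun AB _ ↦ ((d : ℤ) ^ 4 * AB.1, (d : ℤ) ^ 6 * AB.2))
    (fun AB hAB ↦ ?_) (fun AB _ CD _ h ↦ ?_) fun ⟨A, B⟩ hAB ↦ ?_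
  · exact Finset.mem_filter.2
      ⟨(mem_iff AB.1 AB.2).2 hAB, dvd_mul_right _ _, dvd_mul_right _ _⟩
  · simpa [d_ne, Prod.ext_iff] using h
  · obtain ⟨hAB, ⟨a, rfl⟩, b, rfl⟩ := Finset.mem_filter.1 hAB
    exact ⟨(a, b), (mem_iff a b).1 hAB, rfl⟩

open Classical in
lemma abs_moebius_mul_card_splitBox_sub_le (hp : 5 ≤ p) {y : ℝ} (hy : 0 ≤ y) (d : ℕ) :
    |(μ d : ℝ) * #{AB ∈ splitBox p y | (d : ℤ) ^ 4 ∣ AB.1 ∧ (d : ℤ) ^ 6 ∣ AB.2} -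
      ((p : ℝ) - 1) / (2 * (p : ℝ) ^ 2) * 4 * y ^ 10 *
        (if d.Coprime p then (μ d : ℝ) / (d : ℝ) ^ 10 else 0)| ≤ 5 * y ^ 6 * (1 / (d : ℝ) ^ 6) := by
  have coprime_iff : d.Coprime p ↔ ¬ p ∣ d :=
    Nat.coprime_comm.trans (Fact.out : p.Prime).coprime_iff_not_dvd
  by_cases hd : p ∣ d
  · rw [filter_pow_dvd_splitBox_eq_empty hd, if_neg (coprime_iff.not.2 (not_not.2 hd))]
    simp only [Finset.card_empty, Nat.cast_zero, mul_zero, sub_zero, abs_zero]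
    positivity
  · have abs_moebius_le : |(μ d : ℝ)| ≤ 1 := mod_cast abs_moebius_le_one
    rw [card_filter_pow_dvd_splitBox hp hd, if_pos (coprime_iff.2 hd)]
    calc |(μ d : ℝ) * #(splitBox p (y / d)) -
          ((p : ℝ) - 1) / (2 * (p : ℝ) ^ 2) * 4 * y ^ 10 * ((μ d : ℝ) / (d : ℝ) ^ 10)|
        = |(μ d : ℝ)| * |(#(splitBox p (y / d)) : ℝ) -
            ((p : ℝ) - 1) / (2 * (p : ℝ) ^ 2) * 4 * (y / d) ^ 10| := by
          rw [← abs_mul, div_pow]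
          ring_nf
      _ ≤ 1 * (5 * (y / d) ^ 6) := by
          gcongr
          exact abs_card_splitBox_sub_le hp (by positivity)
      _ = 5 * y ^ 6 * (1 / (d : ℝ) ^ 6) := by rw [div_pow]; ring

open Classical in
lemma abs_card_filter_condM_splitBox_sub_le (hp : 5 ≤ p) {y : ℝ} (hy : 0 ≤ y) :
    |(#{AB ∈ splitBox p y | CondM AB.1 AB.2} : ℝ) - ((p : ℝ) - 1) / (2 * (p : ℝ) ^ 2) *
      ((p : ℝ) ^ 10 / ((p : ℝ) ^ 10 - 1)) * (4 / (riemannZeta 10).re) * y ^ 10| ≤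
        5 * y ^ 6 * ∑' d : ℕ, 1 / (d : ℝ) ^ 6 := by
  have moebius_card := hasSum_moebius_mul_card (splitBox p y)
    fun AB hAB ↦ (mem_splitBox.1 hAB).2.2.left_ne_zero
  have moebius_density := (hasSum_moebius_coprime p (k := 10) (by norm_num)).mul_left
    (((p : ℝ) - 1) / (2 * (p : ℝ) ^ 2) * 4 * y ^ 10)
  have one_lt_pow : 1 < (p : ℝ) ^ 10 := one_lt_pow₀ (by norm_cast; omega) (by norm_num)
  have density_eq : ((p : ℝ) - 1) / (2 * (p : ℝ) ^ 2) * 4 * y ^ 10 *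
      ((∏ q ∈ p.primeFactors, (1 - ((q : ℝ) ^ 10)⁻¹)) * (riemannZeta (10 : ℕ)).re)⁻¹ =
      ((p : ℝ) - 1) / (2 * (p : ℝ) ^ 2) * ((p : ℝ) ^ 10 / ((p : ℝ) ^ 10 - 1)) *
        (4 / (riemannZeta 10).re) * y ^ 10 := by
    have euler_factor : (1 - ((p : ℝ) ^ 10)⁻¹)⁻¹ = (p : ℝ) ^ 10 / ((p : ℝ) ^ 10 - 1) := by
      rw [← one_div_div, sub_div, div_self (by positivity), one_div, one_div]
    rw [Nat.Prime.primeFactors Fact.out, Finset.prod_singleton, mul_inv, euler_factor,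
      Nat.cast_ofNat]
    ring
  rw [density_eq] at moebius_density
  have error_summable : Summable fun d : ℕ ↦ 1 / (d : ℝ) ^ 6 :=
    Real.summable_one_div_nat_pow.2 (by norm_num)
  rw [← (moebius_card.sub moebius_density).tsum_eq, ← Real.norm_eq_abs]
  exact tsum_of_norm_bounded (error_summable.hasSum.mul_left _)
    fun d ↦ abs_moebius_mul_card_splitBox_sub_le hp hy d

end Prime

/-! ### From the box to the family -/

lemma card_filter_disc_eq_zero_splitBox_le (p : ℕ) (y : ℝ) :
    (#{AB ∈ splitBox p y | 4 * AB.1 ^ 3 + 27 * AB.2 ^ 2 = 0} : ℝ) ≤ 2 * y ^ 6 := by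
  have card_le : #{AB ∈ splitBox p y | 4 * AB.1 ^ 3 + 27 * AB.2 ^ 2 = 0} ≤
      #((symmInterval (y ^ 6)).erase 0) := by
    refine Finset.card_le_card_of_injOn Prod.snd (fun ⟨A, B⟩ hAB ↦ ?_) ?_
    · obtain ⟨-, hB, split⟩ := mem_splitBox.1 (Finset.mem_filter.1 hAB).1
      exact Finset.mem_erase.2 ⟨split.right_ne_zero, mem_symmInterval.2 hB⟩
    · rintro ⟨A, B⟩ hA ⟨A', _⟩ hA' rfl
      have disc : 4 * A ^ 3 + 27 * B ^ 2 = 0 := (Finset.mem_filter.1 hA).2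
      have disc' : 4 * A' ^ 3 + 27 * B ^ 2 = 0 := (Finset.mem_filter.1 hA').2
      have cube_eq : A ^ 3 = A' ^ 3 := by linarith
      rw [(Odd.strictMono_pow (by decide : Odd 3)).injective cube_eq]
  calc (#{AB ∈ splitBox p y | 4 * AB.1 ^ 3 + 27 * AB.2 ^ 2 = 0} : ℝ)
      ≤ #((symmInterval (y ^ 6)).erase 0) := mod_cast card_le
    _ ≤ 2 * y ^ 6 := card_symmInterval_erase_zero_le (by positivity)

lemma max_abs_pow_three_sq_le_iff (y : ℝ) (A B : ℤ) :
    ((max (|A| ^ 3) (B ^ 2) : ℤ) : ℝ) ≤ y ^ 12 ↔ |(A : ℝ)| ≤ y ^ 4 ∧ |(B : ℝ)| ≤ y ^ 6 := by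
  push_cast
  rw [max_le_iff, ← sq_abs (B : ℝ), pow_mul y 4 3,
    pow_le_pow_iff_left₀ (abs_nonneg _) (by positivity) (by norm_num), ← pow_mul, pow_mul y 6 2,
    pow_le_pow_iff_left₀ (abs_nonneg _) (by positivity) (by norm_num)]

open Classical in
lemma setOf_mem_Efam_isSplitAt (y : ℝ) (p : ℕ) :
    {AB ∈ Efam (y ^ 12) | IsSplitAt p AB.1 AB.2} =
      ↑{AB ∈ {AB ∈ splitBox p y | CondM AB.1 AB.2} | ¬ 4 * AB.1 ^ 3 + 27 * AB.2 ^ 2 = 0} := by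
  ext ⟨A, B⟩
  simp only [Efam, Set.mem_ofPred_eq, max_abs_pow_three_sq_le_iff, Finset.coe_filter,
    Finset.mem_filter, mem_splitBox]
  tauto

lemma abs_ncard_Efam_isSplitAt_sub_le {p : ℕ} [Fact p.Prime] (hp : 5 ≤ p) {y : ℝ} (hy : 0 ≤ y) :
    |({AB ∈ Efam (y ^ 12) | IsSplitAt p AB.1 AB.2}.ncard : ℝ) -
      ((p : ℝ) - 1) / (2 * (p : ℝ) ^ 2) * ((p : ℝ) ^ 10 / ((p : ℝ) ^ 10 - 1)) *
        (4 / (riemannZeta 10).re) * y ^ 10| ≤ (5 * ∑' d : ℕ, 1 / (d : ℝ) ^ 6 + 2) * y ^ 6 := by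
  classical
  rw [setOf_mem_Efam_isSplitAt, Set.ncard_coe_finset]
  set condM_box := {AB ∈ splitBox p y | CondM AB.1 AB.2} with condM_box_def
  have card_add_card : (#{AB ∈ condM_box | 4 * AB.1 ^ 3 + 27 * AB.2 ^ 2 = 0} : ℝ) +
      #{AB ∈ condM_box | ¬ 4 * AB.1 ^ 3 + 27 * AB.2 ^ 2 = 0} = #condM_box :=
    mod_cast Finset.card_filter_add_card_filter_not _
  have singular_le : (#{AB ∈ condM_box | 4 * AB.1 ^ 3 + 27 * AB.2 ^ 2 = 0} : ℝ) ≤ 2 * y ^ 6 :=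
    le_trans (mod_cast Finset.card_le_card (Finset.filter_subset_filter _
      (Finset.filter_subset _ _))) (card_filter_disc_eq_zero_splitBox_le p y)
  have condM_bound := abs_card_filter_condM_splitBox_sub_le hp hy
  rw [← condM_box_def, ← card_add_card, abs_le] at condM_bound
  have singular_nonneg :
      (0 : ℝ) ≤ #{AB ∈ condM_box | 4 * AB.1 ^ 3 + 27 * AB.2 ^ 2 = 0} := Nat.cast_nonneg _
  rw [abs_le]
  constructor <;> linarith [condM_bound.1, condM_bound.2, singular_nonneg]

theorem stmt_15_general :
    ∃ K : ℝ, 0 < K ∧ ∀ (p : ℕ), p.Prime → 5 ≤ p → ∀ (X : ℝ), 0 ≤ X →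
      |({AB ∈ Efam X | IsSplitAt p AB.1 AB.2}.ncard : ℝ)
          - (((p : ℝ) - 1) / (2 * (p : ℝ) ^ 2)) * ((p : ℝ) ^ 10 / ((p : ℝ) ^ 10 - 1))
            * (4 / (riemannZeta 10).re) * X ^ ((5 : ℝ) / 6)|
        ≤ K * X ^ ((1 : ℝ) / 2) := by
  refine ⟨5 * ∑' d : ℕ, 1 / (d : ℝ) ^ 6 + 2, by positivity, fun p hp h5 X hX ↦ ?_⟩
  have : Fact p.Prime := ⟨hp⟩
  obtain ⟨y, hy, rfl⟩ : ∃ y : ℝ, 0 ≤ y ∧ y ^ 12 = X :=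
    ⟨X ^ (12⁻¹ : ℝ), by positivity, Real.rpow_inv_natCast_pow hX (by norm_num : 12 ≠ 0)⟩
  have rpow_five_sixths : (y ^ 12) ^ ((5 : ℝ) / 6) = y ^ 10 := by
    rw [← Real.rpow_natCast, ← Real.rpow_natCast, ← Real.rpow_mul hy]
    norm_num
  have rpow_half : (y ^ 12) ^ ((1 : ℝ) / 2) = y ^ 6 := by
    rw [← Real.rpow_natCast, ← Real.rpow_natCast, ← Real.rpow_mul hy]
    norm_num
  rw [rpow_five_sixths, rpow_half]
  exact abs_ncard_Efam_isSplitAt_sub_le h5 hy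

theorem stmt_15 :
    ∃ K : ℝ, 0 < K ∧ ∀ (p : ℕ), p.Prime → 5 ≤ p → ∀ (X : ℝ), (p : ℝ) ^ 3 ≤ X →
      |({AB ∈ Efam X | (p : ℤ) ∣ (4 * AB.1 ^ 3 + 27 * AB.2 ^ 2) ∧ ¬ (p : ℤ) ∣ AB.1 ∧
            ((-18 * AB.1 * AB.2 : ℤ) : ZMod p) ≠ 0 ∧
            IsSquare ((-18 * AB.1 * AB.2 : ℤ) : ZMod p)}.ncard : ℝ)
          - (((p : ℝ) - 1) / (2 * (p : ℝ) ^ 2)) * ((p : ℝ) ^ 10 / ((p : ℝ) ^ 10 - 1))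
            * (4 / (riemannZeta 10).re) * X ^ ((5 : ℝ) / 6)|
        ≤ K * X ^ ((1 : ℝ) / 2) := by
  obtain ⟨K, K_pos, bound⟩ := stmt_15_general
  exact ⟨K, K_pos, fun p hp h5 X hX ↦ bound p hp h5 X (le_trans (by positivity) hX)⟩
end
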